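/- In a commutative quasi-Banach algebra A, every maximal ideal is the kernel of a complex homomorphism, and conversely the kernel of every complex homomorphism is a maximal ideal; moreover, x ∈ A is invertible if and only if x lies in no proper ideal of A. -/

import Mathlib

/-- A quasi-Banach algebra structure on a complete metric ring `A`: the quasi-norm `N`
is a `q`-norm (`0 < q ≤ 1`), is multiplicative up to the constant `C_P ≥ 1`,
`‖e‖ = 1`, and the metric is induced by `N (x - y) ^ q`. -/
class QuasiBanachAlgebra (A : Type*) [Ring A] [Algebra ℂ A] [MetricSpace A] [CompleteSpace A]
    (N : A → ℝ) (q Cp : ℝ) : Prop where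
  q_pos : 0 < q
  q_le_one : q ≤ 1
  one_le_Cp : 1 ≤ Cp
  nonneg : ∀ x, 0 ≤ N x
  eq_zero_iff : ∀ x, N x = 0 ↔ x = 0
  smul_eq : ∀ (c : ℂ) (x : A), N (c • x) = ‖c‖ * N x
  add_pow_le : ∀ x y, N (x + y) ^ q ≤ N x ^ q + N y ^ q
  mul_le : ∀ x y, N (x * y) ≤ Cp * N x * N y
  norm_one : N 1 = 1
  dist_eq : ∀ x y, dist x y = N (x - y) ^ q

namespace QuasiBanachAlgebra

open Filter Topology Finset

/-- The exponential rates `r > 0` that dominate the powers of `x`. -/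
def growthRates {A : Type*} [Monoid A] (N : A → ℝ) (x : A) : Set ℝ :=
  {r | 0 < r ∧ ∃ C, ∀ n : ℕ, N (x ^ n) ≤ C * r ^ n}

/-- The infimum of the growth rates of the powers of `x`; for a quasi-norm `N` this is the
spectral radius of `x`. -/
noncomputable def growth {A : Type*} [Monoid A] (N : A → ℝ) (x : A) : ℝ :=
  sInf (growthRates N x)

section Growth

variable {A : Type*} [Monoid A] {N : A → ℝ} {x : A} {r : ℝ}

theorem bddBelow_growthRates : BddBelow (growthRates N x) :=
  ⟨0, fun _ hr => hr.1.le⟩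

theorem growth_nonneg : 0 ≤ growth N x :=
  Real.sInf_nonneg fun _ hr => hr.1.le

theorem growth_le (hr : r ∈ growthRates N x) : growth N x ≤ r :=
  csInf_le bddBelow_growthRates hr

end Growth

section Ring

variable {A : Type*} [Ring A] [Algebra ℂ A] [MetricSpace A] [CompleteSpace A]
  (N : A → ℝ) (q Cp : ℝ) [h : QuasiBanachAlgebra A N q Cp]

include h

theorem map_neg_eq (x : A) : N (-x) = N x := by
  simpa using h.smul_eq (-1) x

theorem sum_rpow_le {ι : Type*} (s : Finset ι) (f : ι → A) :
    N (∑ i ∈ s, f i) ^ q ≤ ∑ i ∈ s, N (f i) ^ q := by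
  refine Finset.le_sum_of_subadditive (fun x => N x ^ q) ?_ h.add_pow_le s f
  simp [(h.eq_zero_iff 0).2 rfl, Real.zero_rpow h.q_pos.ne']

theorem pow_le (x : A) (n : ℕ) : N (x ^ n) ≤ (Cp * N x) ^ n := by
  induction n with
  | zero => simp [h.norm_one]
  | succ n ih =>
    have := h.nonneg x
    have := h.one_le_Cp
    calc N (x ^ (n + 1)) ≤ Cp * N (x ^ n) * N x := by rw [pow_succ]; exact h.mul_le _ _
      _ ≤ Cp * (Cp * N x) ^ n * N x := by gcongr
      _ = (Cp * N x) ^ (n + 1) := by ring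

theorem growthRates_nonempty (x : A) : (growthRates N x).Nonempty := by
  have := h.nonneg x
  have := h.one_le_Cp
  refine ⟨Cp * N x + 1, by positivity, 1, fun n => (pow_le N q Cp x n).trans ?_⟩
  rw [one_mul]
  gcongr
  linarith

theorem mem_growthRates_of_growth_lt {x : A} {r : ℝ} (hr : growth N x < r) :
    r ∈ growthRates N x := by
  obtain ⟨s, ⟨hs, C, hC⟩, hsr⟩ := exists_lt_of_csInf_lt (growthRates_nonempty N q Cp x) hr
  have hC0 : 0 ≤ C := by simpa using (h.nonneg _).trans (hC 0)
  exact ⟨hs.trans hsr, C, fun n => (hC n).trans (by gcongr)⟩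

theorem growth_zero : growth N (0 : A) = 0 := by
  refine le_antisymm (le_of_forall_gt_imp_ge_of_dense fun r hr => growth_le ⟨hr, 1, ?_⟩)
    growth_nonneg
  rintro (_ | n)
  · simp [h.norm_one]
  · simp only [ne_eq, n.succ_ne_zero, not_false_eq_true, zero_pow, (h.eq_zero_iff 0).2 rfl]
    positivity

theorem growth_smul_le (c : ℂ) (x : A) : growth N (c • x) ≤ ‖c‖ * growth N x := by
  refine le_mul_of_forall_lt₀ fun t ht r hr => ?_
  obtain ⟨hr0, C, hC⟩ := mem_growthRates_of_growth_lt N q Cp hr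
  refine growth_le ⟨mul_pos ((norm_nonneg c).trans_lt ht) hr0, C, fun n => ?_⟩
  have := h.nonneg (x ^ n)
  calc N ((c • x) ^ n) = ‖c‖ ^ n * N (x ^ n) := by rw [smul_pow, h.smul_eq, norm_pow]
    _ ≤ t ^ n * (C * r ^ n) := by
      gcongr
      · exact pow_nonneg ((norm_nonneg c).trans ht.le) n
      · exact hC n
    _ = C * (t * r) ^ n := by ring

theorem growth_neg (x : A) : growth N (-x) = growth N x := by
  have key : ∀ y : A, growth N (-y) ≤ growth N y := fun y => by
    simpa using growth_smul_le N q Cp (-1) y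
  exact le_antisymm (key x) (by simpa using key (-x))

/-- Neumann series: an element of growth less than one, subtracted from `1`, has a right inverse. -/
theorem exists_one_sub_mul_eq_one {z : A} (hz : growth N z < 1) : ∃ s, (1 - z) * s = 1 := by
  have hq := h.q_pos
  have hCp := h.one_le_Cp
  obtain ⟨r, hzr, hr1⟩ := exists_between hz
  obtain ⟨hr0, C, hC⟩ := mem_growthRates_of_growth_lt N q Cp hzr
  have hC0 : 0 ≤ C := by simpa using (h.nonneg _).trans (hC 0)
  have hbound : ∀ n : ℕ, N (z ^ n) ^ q ≤ C ^ q * (r ^ q) ^ n := fun n => by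
    calc N (z ^ n) ^ q ≤ (C * r ^ n) ^ q := Real.rpow_le_rpow (h.nonneg _) (hC n) hq.le
      _ = C ^ q * (r ^ q) ^ n := by
        rw [Real.mul_rpow hC0 (by positivity), Real.rpow_pow_comm hr0.le]
  have hrq : r ^ q < 1 := Real.rpow_lt_one hr0.le hr1 hq
  set S : ℕ → A := fun n => ∑ i ∈ range n, z ^ i with hS
  have hcauchy : CauchySeq S := cauchySeq_of_le_geometric (r ^ q) (C ^ q) hrq fun n => by
    rw [h.dist_eq, ← map_neg_eq N q Cp]
    simpa [hS, sum_range_succ] using hbound n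
  obtain ⟨s, hs⟩ := cauchySeq_tendsto_of_complete hcauchy
  refine ⟨s, tendsto_nhds_unique (f := fun n => (1 - z) * S n) (l := atTop) ?_ ?_⟩
  · rw [tendsto_iff_dist_tendsto_zero] at hs ⊢
    refine squeeze_zero (fun _ => dist_nonneg) (fun n => ?_)
      (by simpa using hs.const_mul ((Cp * N (1 - z)) ^ q))
    have h1 := h.nonneg (1 - z)
    have h2 := h.nonneg (S n - s)
    rw [h.dist_eq, h.dist_eq, ← mul_sub, ← Real.mul_rpow (by positivity) h2]
    exact Real.rpow_le_rpow (h.nonneg _) (h.mul_le _ _) hq.le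
  · rw [tendsto_iff_dist_tendsto_zero]
    refine squeeze_zero (fun _ => dist_nonneg) (fun n => ?_)
      (by simpa using (tendsto_pow_atTop_nhds_zero_of_lt_one (by positivity) hrq).const_mul (C ^ q))
    rw [h.dist_eq, hS, mul_neg_geom_sum, ← map_neg_eq N q Cp]
    simpa using hbound n

end Ring

section CommRing

variable {A : Type*} [CommRing A] [Algebra ℂ A] [MetricSpace A] [CompleteSpace A]
  (N : A → ℝ) (q Cp : ℝ) [h : QuasiBanachAlgebra A N q Cp]

include h

theorem growth_mul_le (x y : A) : growth N (x * y) ≤ growth N x * growth N y := by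
  refine le_mul_of_forall_lt₀ fun r hr s hs => ?_
  obtain ⟨hr0, C, hC⟩ := mem_growthRates_of_growth_lt N q Cp hr
  obtain ⟨hs0, D, hD⟩ := mem_growthRates_of_growth_lt N q Cp hs
  refine growth_le ⟨mul_pos hr0 hs0, Cp * C * D, fun n => ?_⟩
  have hC0 : 0 ≤ C := by simpa using (h.nonneg _).trans (hC 0)
  have hCp := h.one_le_Cp
  have hy := h.nonneg (y ^ n)
  calc N ((x * y) ^ n) ≤ Cp * N (x ^ n) * N (y ^ n) := by rw [mul_pow]; exact h.mul_le _ _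
    _ ≤ Cp * (C * r ^ n) * (D * s ^ n) := by
      gcongr
      · exact hC n
      · exact hD n
    _ = Cp * C * D * (r * s) ^ n := by ring

/-- The `q`-triangle inequality costs only the number `n + 1` of terms in the binomial expansion. -/
theorem add_pow_rpow_le {x y : A} {r s C D : ℝ} (hr : 0 < r) (hs : 0 < s)
    (hC : ∀ n : ℕ, N (x ^ n) ≤ C * r ^ n) (hD : ∀ n : ℕ, N (y ^ n) ≤ D * s ^ n) (n : ℕ) :
    N ((x + y) ^ n) ^ q ≤ (n + 1) * (Cp * C * D * (r + s) ^ n) ^ q := by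
  have hC0 : 0 ≤ C := by simpa using (h.nonneg _).trans (hC 0)
  have hD0 : 0 ≤ D := by simpa using (h.nonneg _).trans (hD 0)
  have hCp := h.one_le_Cp
  have hterm : ∀ k ∈ range (n + 1), N (x ^ k * y ^ (n - k) * (n.choose k : A)) ^ q ≤
      (Cp * C * D * (r + s) ^ n) ^ q := fun k hk => by
    refine Real.rpow_le_rpow (h.nonneg _) ?_ h.q_pos.le
    have hy := h.nonneg (y ^ (n - k))
    have hcast : x ^ k * y ^ (n - k) * (n.choose k : A) =
        (n.choose k : ℂ) • (x ^ k * y ^ (n - k)) := by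
      rw [Algebra.smul_def, map_natCast, mul_comm]
    have hbinom : r ^ k * s ^ (n - k) * (n.choose k : ℝ) ≤ (r + s) ^ n := by
      rw [add_pow]
      exact single_le_sum (f := fun k => r ^ k * s ^ (n - k) * (n.choose k : ℝ))
        (fun _ _ => by positivity) hk
    calc N (x ^ k * y ^ (n - k) * (n.choose k : A))
        = n.choose k * N (x ^ k * y ^ (n - k)) := by rw [hcast, h.smul_eq, Complex.norm_natCast]
      _ ≤ n.choose k * (Cp * (C * r ^ k) * (D * s ^ (n - k))) := by
        gcongr
        refine (h.mul_le _ _).trans ?_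
        gcongr
        · exact hC k
        · exact hD (n - k)
      _ = Cp * C * D * (r ^ k * s ^ (n - k) * n.choose k) := by ring
      _ ≤ Cp * C * D * (r + s) ^ n := by gcongr
  calc N ((x + y) ^ n) ^ q
      ≤ ∑ k ∈ range (n + 1), N (x ^ k * y ^ (n - k) * (n.choose k : A)) ^ q := by
        rw [add_pow]; exact sum_rpow_le N q Cp _ _
    _ ≤ ∑ k ∈ range (n + 1), (Cp * C * D * (r + s) ^ n) ^ q := sum_le_sum hterm
    _ = (n + 1) * (Cp * C * D * (r + s) ^ n) ^ q := by simp

theorem growth_add_le (x y : A) : growth N (x + y) ≤ growth N x + growth N y := by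
  refine le_of_forall_gt_imp_ge_of_dense fun t ht => ?_
  obtain ⟨r, s, hr, hs, hrs⟩ : ∃ r s, growth N x < r ∧ growth N y < s ∧ r + s < t :=
    ⟨growth N x + (t - growth N x - growth N y) / 3,
      growth N y + (t - growth N x - growth N y) / 3, by linarith, by linarith, by linarith⟩
  obtain ⟨hr0, C, hC⟩ := mem_growthRates_of_growth_lt N q Cp hr
  obtain ⟨hs0, D, hD⟩ := mem_growthRates_of_growth_lt N q Cp hs
  have hC0 : 0 ≤ C := by simpa using (h.nonneg _).trans (hC 0)
  have hD0 : 0 ≤ D := by simpa using (h.nonneg _).trans (hD 0)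
  have hCp := h.one_le_Cp
  have hq := h.q_pos
  have ht0 : 0 < t := by linarith
  set w : ℝ := (r + s) / t with hw
  have hw0 : 0 < w := by positivity
  have hv1 : w ^ q < 1 := Real.rpow_lt_one hw0.le ((div_lt_one ht0).2 hrs) hq
  set M : ℝ := (1 - w ^ q)⁻¹
  have hM0 : 0 ≤ M := inv_nonneg.2 (by linarith)
  have hM : ∀ n : ℕ, (n + 1 : ℝ) * (w ^ q) ^ n ≤ M := fun n => by
    have hv0 : 0 ≤ w ^ q := by positivity
    calc (n + 1 : ℝ) * (w ^ q) ^ n = ∑ k ∈ range (n + 1), (w ^ q) ^ n := by simp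
      _ ≤ ∑ k ∈ range (n + 1), (w ^ q) ^ k := sum_le_sum fun k hk =>
        pow_le_pow_of_le_one hv0 hv1.le (by simpa [Nat.lt_succ_iff] using hk)
      _ ≤ ∑' k, (w ^ q) ^ k :=
        (summable_geometric_of_lt_one hv0 hv1).sum_le_tsum _ fun _ _ => by positivity
      _ = M := tsum_geometric_of_lt_one hv0 hv1
  refine growth_le ⟨ht0, M ^ q⁻¹ * (Cp * C * D), fun n => ?_⟩
  rw [← Real.rpow_le_rpow_iff (h.nonneg _) (by positivity) hq]
  calc N ((x + y) ^ n) ^ q ≤ (n + 1) * (Cp * C * D * (r + s) ^ n) ^ q :=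
        add_pow_rpow_le N q Cp hr0 hs0 hC hD n
    _ = (n + 1) * (w ^ q) ^ n * (Cp * C * D * t ^ n) ^ q := by
      rw [show r + s = w * t by rw [hw]; field_simp, Real.rpow_pow_comm hw0.le,
        mul_assoc (n + 1 : ℝ), ← Real.mul_rpow (by positivity) (by positivity)]
      ring_nf
    _ ≤ M * (Cp * C * D * t ^ n) ^ q := by gcongr; exact hM n
    _ = (M ^ q⁻¹ * (Cp * C * D) * t ^ n) ^ q := by
      rw [mul_assoc (M ^ q⁻¹), Real.mul_rpow (x := M ^ q⁻¹) (by positivity) (by positivity),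
        Real.rpow_inv_rpow hM0 (ne_of_gt hq)]

/-- The spectral radius of a commutative quasi-Banach algebra is a ring seminorm, even though the
quasi-norm itself need not satisfy the triangle inequality. -/
noncomputable def growthSeminorm : RingSeminorm A where
  toFun := growth N
  map_zero' := growth_zero N q Cp
  add_le' := growth_add_le N q Cp
  neg' := growth_neg N q Cp
  mul_le' := growth_mul_le N q Cp

theorem isUnit_of_growth_one_sub_lt_one {y : A} (hy : growth N (1 - y) < 1) : IsUnit y := by
  obtain ⟨s, hs⟩ := exists_one_sub_mul_eq_one N q Cp hy
  exact .of_mul_eq_one s (by simpa using hs)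

end CommRing

end QuasiBanachAlgebra

/-- **Gelfand–Mazur** for a seminormed algebra that is a field and in which `1` has nonzero
seminorm. -/
theorem exists_algebraMap_eq_of_isField {K : Type*} [SeminormedCommRing K] [NormedAlgebra ℂ K]
    (hK : IsField K) (h1 : ‖(1 : K)‖ ≠ 0) (a : K) : ∃ c : ℂ, algebraMap ℂ K c = a := by
  have : Nontrivial (UniformSpace.Completion K) := by
    refine ⟨⟨((1 : K) : UniformSpace.Completion K), 0, fun h => h1 ?_⟩⟩
    rw [← UniformSpace.Completion.norm_coe, h, norm_zero]
  obtain ⟨c, hc⟩ := spectrum.nonempty (a : UniformSpace.Completion K)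
  refine ⟨c, by_contra fun hne => hc ?_⟩
  obtain ⟨b, hb⟩ := hK.mul_inv_cancel (sub_ne_zero.2 hne)
  have hunit : IsUnit (algebraMap ℂ K c - a) := .of_mul_eq_one b hb
  have := hunit.map (UniformSpace.Completion.coeRingHom : K →+* UniformSpace.Completion K)
  rw [map_sub] at this
  exact this

/-- A maximal ideal at distance at least one from `1`, for some submultiplicative seminorm, has
residue field `ℂ`. -/
theorem Ideal.IsMaximal.bijective_algebraMap_quotient_of_ringSeminorm {A : Type*} [CommRing A]
    [Algebra ℂ A] (p : RingSeminorm A) (hsmul : ∀ (c : ℂ) (x : A), p (c • x) ≤ ‖c‖ * p x)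
    {J : Ideal A} (hJ : J.IsMaximal) (hdist : ∀ j ∈ J, 1 ≤ p (1 - j)) :
    Function.Bijective (algebraMap ℂ (A ⧸ J)) := by
  let _ : SeminormedCommRing A := { p.toSeminormedRing, ‹CommRing A› with }
  let _ : NormedAlgebra ℂ A := { ‹Algebra ℂ A› with norm_smul_le := hsmul }
  have hfield : IsField (A ⧸ J) := (Ideal.Quotient.maximal_ideal_iff_isField_quotient J).1 hJ
  have : Nontrivial (A ⧸ J) := hfield.nontrivial
  refine ⟨(algebraMap ℂ (A ⧸ J)).injective, exists_algebraMap_eq_of_isField hfield fun h1 => ?_⟩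
  obtain ⟨r, hr, hlt⟩ := Ideal.Quotient.norm_mk_lt (1 : A ⧸ J) one_pos
  have hmem : 1 - r ∈ J := Ideal.Quotient.eq.1 (by rw [hr, map_one])
  have hle : 1 ≤ ‖r‖ := (hdist _ hmem).trans_eq (congrArg p (sub_sub_cancel 1 r))
  linarith

/-- Maximal ideals in a commutative quasi-Banach algebra: every maximal ideal is the
kernel of a complex homomorphism, every complex homomorphism has maximal kernel, and
`x` is invertible iff it lies in no proper ideal. -/
theorem maximal_ideals_quasiBanach (A : Type*) [CommRing A] [Algebra ℂ A] [MetricSpace A]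
    [CompleteSpace A] (N : A → ℝ) (q Cp : ℝ) [QuasiBanachAlgebra A N q Cp] :
    (∀ J : Ideal A, J.IsMaximal →
        ∃ φ : A →ₗ[ℂ] ℂ, (∀ a b, φ (a * b) = φ a * φ b) ∧ φ ≠ 0 ∧
          ∀ a : A, a ∈ J ↔ φ a = 0) ∧
      (∀ φ : A →ₗ[ℂ] ℂ, (∀ a b, φ (a * b) = φ a * φ b) → φ ≠ 0 →
        ∃ J : Ideal A, J.IsMaximal ∧ ∀ a : A, a ∈ J ↔ φ a = 0) ∧
      ∀ x : A, IsUnit x ↔ ∀ J : Ideal A, J ≠ ⊤ → x ∉ J := by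
  refine ⟨fun J hJ => ?_, fun φ hmul hφ => ?_, fun x => ⟨fun hx J hJ hxJ => ?_, fun hx => ?_⟩⟩
  · have hbij : Function.Bijective (Algebra.ofId ℂ (A ⧸ J)) :=
      hJ.bijective_algebraMap_quotient_of_ringSeminorm
        (QuasiBanachAlgebra.growthSeminorm N q Cp) (QuasiBanachAlgebra.growth_smul_le N q Cp)
        fun j hj => not_lt.1 fun hlt => hJ.ne_top <| J.eq_top_of_isUnit_mem hj <|
          QuasiBanachAlgebra.isUnit_of_growth_one_sub_lt_one N q Cp hlt
    let ψ : A →ₐ[ℂ] ℂ :=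
      ((AlgEquiv.ofBijective _ hbij).symm : (A ⧸ J) →ₐ[ℂ] ℂ).comp (Ideal.Quotient.mkₐ ℂ J)
    refine ⟨ψ.toLinearMap, map_mul ψ, fun h0 => ?_, fun a => ?_⟩
    · simpa using LinearMap.congr_fun h0 1
    · simp [ψ, Ideal.Quotient.eq_zero_iff_mem]
  · obtain ⟨a, ha⟩ : ∃ a, φ a ≠ 0 := by
      by_contra! h0
      exact hφ (LinearMap.ext h0)
    have h1 : φ 1 = 1 := mul_left_cancel₀ ha (by rw [← hmul, mul_one, mul_one])
    let ψ : A →ₐ[ℂ] ℂ := AlgHom.ofLinearMap φ h1 hmul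
    refine ⟨RingHom.ker ψ, RingHom.ker_isMaximal_of_surjective ψ fun c => ?_, fun b => Iff.rfl⟩
    exact ⟨algebraMap ℂ A c, ψ.commutes c⟩
  · exact hJ (J.eq_top_of_isUnit_mem hxJ hx)
  · by_contra hnu
    obtain ⟨M, hM, hxM⟩ := exists_max_ideal_of_mem_nonunits hnu
    exact hx M hM.ne_top hxM
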